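/- Let A be a self-adjoint operator and λ ∈ ℝ with λ ∉ Spec A. Then there exist δ > 0 and b > 0 such that for every z ∈ ℂ with |z − λ| ≤ δ and every unit vector v ∈ Dom(A²), Re⟨(A−z)² v, v⟩ ≥ b. Consequently, for every finite-dimensional subspace L ⊆ Dom(A²) with orthogonal projection P, the numerical range of P(A−z)²|L is contained in the half-plane {Re w ≥ b}. -/

import Mathlib

open Filter Topology

noncomputable section

variable {H : Type*} [NormedAddCommGroup H] [InnerProductSpace ℂ H] [CompleteSpace H]

/-- `(A - z)²` as a linear map. -/
def sqz (A : H →ₗ[ℂ] H) (z : ℂ) : H →ₗ[ℂ] H :=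
  (A - z • LinearMap.id) ∘ₗ (A - z • LinearMap.id)

/-- Spectrum of the (possibly unbounded) operator given by restricting `A` to `D`. -/
def pspec (D : Submodule ℂ H) (A : H →ₗ[ℂ] H) : Set ℂ :=
  {z | ¬ ∃ R : H →L[ℂ] H, (∀ x ∈ D, R (A x - z • x) = x) ∧
      ∀ y : H, R y ∈ D ∧ A (R y) - z • R y = y}

/-- If `A` is self-adjoint and `λ ∈ ℝ \ Spec A`, then there are `δ > 0` and `b > 0` such
that for every `z` with `|z - λ| ≤ δ` and every unit vector `v ∈ Dom A²`,
`Re ⟪(A - z)² v, v⟫ ≥ b`; consequently, the numerical range of any compression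
`P (A - z)²|_(ran P)` with `ran P ⊆ Dom A²` lies in the half-plane `{Re w ≥ b}`. -/
theorem numerical_range_re_bounded_below_near_resolvent_point
    (D : Submodule ℂ H) (A : H →ₗ[ℂ] H)
    -- `A` restricted to `D` is a (densely defined) self-adjoint operator:
    (hdense : Dense (D : Set H))
    (hsym : ∀ u ∈ D, ∀ v ∈ D, (inner ℂ (A u) v : ℂ) = inner ℂ u (A v))
    (hsa : ∀ x y : H, (∀ u ∈ D, (inner ℂ (A u) x : ℂ) = inner ℂ u y) → x ∈ D ∧ A x = y)
    (l : ℝ) (hl : (l : ℂ) ∉ pspec D A) :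
    ∃ δ > 0, ∃ b > 0, ∀ z : ℂ, ‖z - (l : ℂ)‖ ≤ δ →
      (∀ v : H, v ∈ D → A v ∈ D → ‖v‖ = 1 →
        b ≤ (inner ℂ v (sqz A z v) : ℂ).re) ∧
      ∀ P : H →L[ℂ] H, IsSelfAdjoint P → IsIdempotentElem P →
        (∀ v ∈ LinearMap.range (P : H →ₗ[ℂ] H), v ∈ D ∧ A v ∈ D) →
        ∀ v ∈ LinearMap.range (P : H →ₗ[ℂ] H), ‖v‖ = 1 →
          b ≤ (inner ℂ v (P (sqz A z v)) : ℂ).re := by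
  have hl' : ∃ R : H →L[ℂ] H, (∀ x ∈ D, R (A x - (l : ℂ) • x) = x) ∧
      ∀ y : H, R y ∈ D ∧ A (R y) - (l : ℂ) • R y = y := by
    by_contra h
    exact hl h
  obtain ⟨R, hR, -⟩ := hl'
  have hK : 0 < ‖R‖ + 1 := by positivity
  obtain ⟨c, hc⟩ : ∃ c : ℝ, c = 1 / (‖R‖ + 1) := ⟨_, rfl⟩
  have hc0 : 0 < c := by rw [hc]; positivity
  have key : ∀ z : ℂ, ‖z - (l : ℂ)‖ ≤ c / 4 → ∀ v : H, v ∈ D → A v ∈ D → ‖v‖ = 1 →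
        c ^ 2 / 4 ≤ (inner ℂ v (sqz A z v) : ℂ).re := by
    intro z hz v hv hAv hn
    obtain ⟨w, hw⟩ : ∃ w : H, w = A v - (l : ℂ) • v := ⟨_, rfl⟩
    obtain ⟨m, hm⟩ : ∃ m : ℂ, m = z - (l : ℂ) := ⟨_, rfl⟩
    rw [← hm] at hz
    have hwD : w ∈ D := by
      rw [hw]; exact D.sub_mem hAv (D.smul_mem _ hv)
    have hcw : c ≤ ‖w‖ := by
      have h1 : ‖R w‖ ≤ ‖R‖ * ‖w‖ := R.le_opNorm w
      rw [hw, hR v hv, hn, ← hw] at h1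
      rw [hc, div_le_iff₀ hK]
      nlinarith [norm_nonneg w]
    have hz' : z = m + (l : ℂ) := by rw [hm]; ring
    have hs : sqz A z v = (A w - (l : ℂ) • w) - (2 * m) • w + (m ^ 2) • v := by
      simp only [sqz, LinearMap.comp_apply, LinearMap.sub_apply, LinearMap.smul_apply,
        LinearMap.id_apply, hw, hz', map_sub, map_smul]
      module
    have hi : (inner ℂ v (A w - (l : ℂ) • w) : ℂ) = inner ℂ w w := by
      nth_rewrite 3 [hw]
      rw [inner_sub_right, inner_sub_left, ← hsym v hv w hwD, inner_smul_right,
        inner_smul_left, Complex.conj_ofReal]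
    have hv1 : (inner ℂ v v : ℂ) = 1 := by
      rw [inner_self_eq_norm_sq_to_K, hn]; simp
    have hww : (inner ℂ w w : ℂ).re = ‖w‖ ^ 2 := by
      rw [inner_self_eq_norm_sq_to_K]; norm_cast
    rw [hs, inner_add_right, inner_sub_right, hi, inner_smul_right, inner_smul_right, hv1,
      mul_one, Complex.add_re, Complex.sub_re, hww]
    have h1 : (2 * m * (inner ℂ v w : ℂ)).re ≤ 2 * (c / 4) * ‖w‖ := by
      refine (Complex.re_le_norm _).trans ?_
      rw [norm_mul, norm_mul, Complex.norm_ofNat]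
      have h2 : ‖(inner ℂ v w : ℂ)‖ ≤ ‖w‖ := by
        simpa [hn] using norm_inner_le_norm (𝕜 := ℂ) v w
      gcongr
    have h3 : -(c / 4) ^ 2 ≤ (m ^ 2).re := by
      have h4 := (abs_le.mp (Complex.abs_re_le_norm (m ^ 2))).1
      rw [norm_pow] at h4
      have h5 : ‖m‖ ^ 2 ≤ (c / 4) ^ 2 := by gcongr
      linarith
    nlinarith
  refine ⟨c / 4, by positivity, c ^ 2 / 4, by positivity, fun z hz => ⟨key z hz, ?_⟩⟩
  intro P hP hPi hr v hv hn
  have hPv : P v = v := by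
    obtain ⟨u, rfl⟩ := hv
    exact congrArg (fun T : H →L[ℂ] H => T u) hPi
  have h := ContinuousLinearMap.isSelfAdjoint_iff_isSymmetric.mp hP v (sqz A z v)
  simp only [ContinuousLinearMap.coe_coe, hPv] at h
  rw [← h]
  exact key z hz v (hr v hv).1 (hr v hv).2 hn

end
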